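/- For every t > 0 and every K > 1, writing r = √(t/(1+t)) and r' = 1/√(1+t), one has t + t·((2/π)·𝒦'(r))²·(exp(2(K−1)·μ(r')) − 1) < η_K(t) < t + (1/16)·exp(2μ(r'))·(exp(2(K−1)·μ(r')) − 1). -/

import Mathlib

open Set Filter

/-- Complete elliptic integral of the first kind. -/
noncomputable def ellK (r : ℝ) : ℝ :=
  ∫ θ in (0:ℝ)..(Real.pi / 2), (1 - r ^ 2 * Real.sin θ ^ 2) ^ (-(1/2) : ℝ)

/-- The Grötzsch modulus μ(r) = (π/2)·𝒦'(r)/𝒦(r). -/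
noncomputable def mu (r : ℝ) : ℝ :=
  Real.pi / 2 * ellK (Real.sqrt (1 - r ^ 2)) / ellK r

open Topology

/-- First elliptic integral as a function of the parameter `m = r ^ 2`. -/
noncomputable def KK (m : ℝ) : ℝ :=
  ∫ θ in (0:ℝ)..(Real.pi / 2), (√(1 - m * Real.sin θ ^ 2))⁻¹

/-- Second elliptic integral as a function of the parameter `m = r ^ 2`. -/
noncomputable def EE (m : ℝ) : ℝ :=
  ∫ θ in (0:ℝ)..(Real.pi / 2), √(1 - m * Real.sin θ ^ 2)

lemma rad_pos {m : ℝ} (h1 : m < 1) (θ : ℝ) : 0 < 1 - m * Real.sin θ ^ 2 := by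
  have := Real.sin_sq_add_cos_sq θ
  rcases le_or_gt m 0 with h | h
  · nlinarith [sq_nonneg (Real.sin θ)]
  · nlinarith [sq_nonneg (Real.sin θ), sq_nonneg (Real.cos θ)]

lemma rad_ge {m : ℝ} (h0 : 0 ≤ m) (θ : ℝ) : 1 - m ≤ 1 - m * Real.sin θ ^ 2 := by
  have := Real.sin_sq_add_cos_sq θ
  nlinarith [sq_nonneg (Real.cos θ)]

lemma rad_le {m : ℝ} (h0 : 0 ≤ m) (θ : ℝ) : 1 - m * Real.sin θ ^ 2 ≤ 1 := by
  nlinarith [sq_nonneg (Real.sin θ), mul_nonneg h0 (sq_nonneg (Real.sin θ))]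

lemma D_pos {m : ℝ} (h1 : m < 1) (θ : ℝ) : 0 < √(1 - m * Real.sin θ ^ 2) :=
  Real.sqrt_pos.2 (rad_pos h1 θ)

lemma D_cont (m : ℝ) : Continuous (fun θ => √(1 - m * Real.sin θ ^ 2)) := by fun_prop

lemma Dinv_cont {m : ℝ} (h1 : m < 1) : Continuous (fun θ => (√(1 - m * Real.sin θ ^ 2))⁻¹) :=
  (D_cont m).inv₀ (fun θ => (D_pos h1 θ).ne')

lemma Dinv3_cont {m : ℝ} (h1 : m < 1) :
    Continuous (fun θ => ((√(1 - m * Real.sin θ ^ 2))⁻¹) ^ 3) :=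
  (Dinv_cont h1).pow 3

/-- Differentiation under the integral sign. -/
lemma deriv_int (G G' : ℝ → ℝ) (hG : ∀ x, 0 < x → HasDerivAt G (G' x) x)
    (hG' : ∀ x, 0 < x → ContinuousAt G' x) {m : ℝ} (h0 : 0 < m) (h1 : m < 1) :
    HasDerivAt (fun m => ∫ θ in (0:ℝ)..(Real.pi / 2), G (1 - m * Real.sin θ ^ 2))
      (∫ θ in (0:ℝ)..(Real.pi / 2), -(Real.sin θ ^ 2) * G' (1 - m * Real.sin θ ^ 2)) m := by
  have hcG : ∀ x < (1:ℝ), Continuous (fun θ => G (1 - x * Real.sin θ ^ 2)) := by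
    intro x hx
    rw [continuous_iff_continuousAt]
    intro θ
    have h2 : ContinuousAt G (1 - x * Real.sin θ ^ 2) := (hG _ (rad_pos hx θ)).continuousAt
    exact ContinuousAt.comp (f := fun θ => 1 - x * Real.sin θ ^ 2) h2 (by fun_prop)
  have hcG' : ∀ x < (1:ℝ), Continuous (fun θ => G' (1 - x * Real.sin θ ^ 2)) := by
    intro x hx
    rw [continuous_iff_continuousAt]
    intro θ
    have h2 : ContinuousAt G' (1 - x * Real.sin θ ^ 2) := hG' _ (rad_pos hx θ)
    exact ContinuousAt.comp (f := fun θ => 1 - x * Real.sin θ ^ 2) h2 (by fun_prop)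
  have hcF' : ∀ x < (1:ℝ), Continuous
      (fun θ => -(Real.sin θ ^ 2) * G' (1 - x * Real.sin θ ^ 2)) := by
    intro x hx
    exact (by fun_prop : Continuous fun θ => -(Real.sin θ ^ 2)).mul (hcG' x hx)
  obtain ⟨C, hC⟩ := (isCompact_Icc (a := (1 - m) / 2) (b := (1:ℝ))).exists_bound_of_continuousOn
    (f := G') (fun x hx => (hG' x (by linarith [hx.1])).continuousWithinAt)
  have hs : Ioo 0 ((1 + m) / 2) ∈ 𝓝 m := Ioo_mem_nhds h0 (by linarith)
  refine (intervalIntegral.hasDerivAt_integral_of_dominated_loc_of_deriv_le (bound := fun _ => C)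
    (F := fun m θ => G (1 - m * Real.sin θ ^ 2))
    (F' := fun m θ => -(Real.sin θ ^ 2) * G' (1 - m * Real.sin θ ^ 2)) hs ?_ ?_ ?_ ?_ ?_ ?_).2
  · filter_upwards [hs] with x hx
    exact (hcG x (by linarith [hx.2])).aestronglyMeasurable
  · exact (hcG m h1).intervalIntegrable _ _
  · exact (hcF' m h1).aestronglyMeasurable
  · refine Eventually.of_forall fun θ _ x hx => ?_
    have h3 := hC (1 - x * Real.sin θ ^ 2)
      ⟨by linarith [rad_ge hx.1.le θ, hx.2], rad_le hx.1.le θ⟩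
    rw [norm_mul, norm_neg]
    have h4 : ‖Real.sin θ ^ 2‖ ≤ 1 := by
      rw [Real.norm_of_nonneg (sq_nonneg _)]; exact Real.sin_sq_le_one θ
    calc _ ≤ 1 * C := by gcongr
      _ = C := one_mul _
  · exact intervalIntegrable_const
  · refine Eventually.of_forall fun θ _ x hx => ?_
    have h2 := hG (1 - x * Real.sin θ ^ 2) (rad_pos (by linarith [hx.2]) θ)
    have h3 : HasDerivAt (fun x : ℝ => 1 - x * Real.sin θ ^ 2) (-(Real.sin θ ^ 2)) x := by
      simpa using ((hasDerivAt_id x).mul_const (Real.sin θ ^ 2)).const_sub 1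
    have := h2.comp x h3
    rw [mul_comm] at this
    exact this

lemma int_cube {m : ℝ} (h0 : 0 < m) (h1 : m < 1) :
    ∫ θ in (0:ℝ)..(Real.pi / 2), ((√(1 - m * Real.sin θ ^ 2))⁻¹) ^ 3 = EE m / (1 - m) := by
  have hd : ∀ θ ∈ uIcc 0 (Real.pi / 2), HasDerivAt
      (fun θ => Real.sin θ * Real.cos θ / √(1 - m * Real.sin θ ^ 2))
      ((√(1 - m * Real.sin θ ^ 2) - (1 - m) * ((√(1 - m * Real.sin θ ^ 2))⁻¹) ^ 3) / m) θ := by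
    intro θ _
    have hp := rad_pos h1 θ
    have hD := D_pos h1 θ
    have e1 : HasDerivAt (fun θ => 1 - m * Real.sin θ ^ 2)
        (-(m * (2 * Real.sin θ * Real.cos θ))) θ := by
      have := (((Real.hasDerivAt_sin θ).pow 2).const_mul m).const_sub 1
      simpa using this
    have e2 := e1.sqrt hp.ne'
    have e3 := ((Real.hasDerivAt_sin θ).mul (Real.hasDerivAt_cos θ)).div e2 hD.ne'
    refine e3.congr_deriv ?_
    have hsq : √(1 - m * Real.sin θ ^ 2) ^ 2 = 1 - m * Real.sin θ ^ 2 := Real.sq_sqrt hp.le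
    have hc := Real.sin_sq_add_cos_sq θ
    simp only [Pi.mul_apply]
    set D := √(1 - m * Real.sin θ ^ 2)
    set s := Real.sin θ
    set c := Real.cos θ
    have hc2 : c ^ 2 = 1 - s ^ 2 := by linarith
    have hD4 : D ^ 4 = (1 - m * s ^ 2) ^ 2 := by rw [← hsq]; ring
    field_simp
    ring_nf
    simp only [hc2, hsq, hD4]
    ring
  have hcont : Continuous (fun θ => (√(1 - m * Real.sin θ ^ 2) -
      (1 - m) * ((√(1 - m * Real.sin θ ^ 2))⁻¹) ^ 3) / m) :=
    ((D_cont m).sub (((Dinv_cont h1).pow 3).const_mul _)).div_const _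
  have h := intervalIntegral.integral_eq_sub_of_hasDerivAt hd (hcont.intervalIntegrable _ _)
  rw [intervalIntegral.integral_div, intervalIntegral.integral_sub
    ((D_cont m).intervalIntegrable _ _)
    (((Dinv3_cont h1).const_mul _).intervalIntegrable _ _),
    intervalIntegral.integral_const_mul] at h
  simp only [Real.sin_pi_div_two, Real.cos_pi_div_two, Real.sin_zero, mul_zero, zero_mul,
    zero_div, sub_zero] at h
  have h' : EE m - (1 - m) * ∫ θ in (0:ℝ)..(Real.pi / 2), ((√(1 - m * Real.sin θ ^ 2))⁻¹) ^ 3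
      = 0 := by
    rcases div_eq_zero_iff.1 h with h | h
    · exact h
    · exact absurd h h0.ne'
  rw [eq_div_iff (by linarith)]
  linarith

lemma KK_deriv {m : ℝ} (h0 : 0 < m) (h1 : m < 1) :
    HasDerivAt KK ((EE m - (1 - m) * KK m) / (2 * m * (1 - m))) m := by
  have h := deriv_int (fun x => (√x)⁻¹) (fun x => -(1 / (2 * √x)) / (√x) ^ 2)
    (fun x hx => ((hasDerivAt_id x).sqrt hx.ne').inv (Real.sqrt_pos.2 hx).ne')
    (fun x hx => by
      have := (Real.sqrt_pos.2 hx).ne'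
      fun_prop (disch := positivity)) h0 h1
  refine h.congr_deriv ?_
  have h2 : ∀ θ, -(Real.sin θ ^ 2) *
      (-(1 / (2 * √(1 - m * Real.sin θ ^ 2))) / √(1 - m * Real.sin θ ^ 2) ^ 2)
      = (1 / (2 * m)) * (((√(1 - m * Real.sin θ ^ 2))⁻¹) ^ 3 - (√(1 - m * Real.sin θ ^ 2))⁻¹) := by
    intro θ
    have hD := D_pos h1 θ
    have hsq : √(1 - m * Real.sin θ ^ 2) ^ 2 = 1 - m * Real.sin θ ^ 2 :=
      Real.sq_sqrt (rad_pos h1 θ).le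
    set D := √(1 - m * Real.sin θ ^ 2)
    field_simp
    linarith
  simp only [h2]
  rw [intervalIntegral.integral_const_mul, intervalIntegral.integral_sub
    ((Dinv3_cont h1).intervalIntegrable _ _) ((Dinv_cont h1).intervalIntegrable _ _),
    int_cube h0 h1]
  change 1 / (2 * m) * (EE m / (1 - m) - KK m) = _
  have : 1 - m ≠ 0 := by linarith
  field_simp

lemma EE_deriv {m : ℝ} (h0 : 0 < m) (h1 : m < 1) :
    HasDerivAt EE ((EE m - KK m) / (2 * m)) m := by
  have h := deriv_int (fun x => √x) (fun x => (1 / (2 * √x)))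
    (fun x hx => ((hasDerivAt_id x).sqrt hx.ne'))
    (fun x hx => by
      have := (Real.sqrt_pos.2 hx).ne'
      fun_prop (disch := positivity)) h0 h1
  refine h.congr_deriv ?_
  have h2 : ∀ θ, -(Real.sin θ ^ 2) * (1 / (2 * √(1 - m * Real.sin θ ^ 2)))
      = (1 / (2 * m)) * (√(1 - m * Real.sin θ ^ 2) - (√(1 - m * Real.sin θ ^ 2))⁻¹) := by
    intro θ
    have hD := D_pos h1 θ
    have hsq : √(1 - m * Real.sin θ ^ 2) ^ 2 = 1 - m * Real.sin θ ^ 2 :=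
      Real.sq_sqrt (rad_pos h1 θ).le
    set D := √(1 - m * Real.sin θ ^ 2)
    field_simp
    linarith
  simp only [h2]
  rw [intervalIntegral.integral_const_mul, intervalIntegral.integral_sub
    ((D_cont m).intervalIntegrable _ _) ((Dinv_cont h1).intervalIntegrable _ _)]
  change 1 / (2 * m) * (EE m - KK m) = _
  ring

lemma KK_ge {m : ℝ} (h0 : 0 ≤ m) (h1 : m < 1) : Real.pi / 2 ≤ KK m := by
  have h : ∫ θ in (0:ℝ)..(Real.pi / 2), (1:ℝ) ≤ KK m := by
    refine intervalIntegral.integral_mono_on (by positivity) intervalIntegrable_const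
      ((Dinv_cont h1).intervalIntegrable _ _) fun θ _ => ?_
    rw [one_le_inv₀ (D_pos h1 θ)]
    exact Real.sqrt_le_one.2 (rad_le h0 θ)
  simpa using h

lemma KK_pos {m : ℝ} (h0 : 0 ≤ m) (h1 : m < 1) : 0 < KK m :=
  lt_of_lt_of_le (by positivity) (KK_ge h0 h1)

lemma KK_le {m : ℝ} (h0 : 0 ≤ m) (h1 : m < 1) : KK m ≤ Real.pi / 2 / √(1 - m) := by
  have h : KK m ≤ ∫ θ in (0:ℝ)..(Real.pi / 2), (√(1 - m))⁻¹ := by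
    refine intervalIntegral.integral_mono_on (by positivity)
      ((Dinv_cont h1).intervalIntegrable _ _) intervalIntegrable_const fun θ _ => ?_
    have : 0 < √(1 - m) := Real.sqrt_pos.2 (by linarith)
    exact inv_anti₀ this (Real.sqrt_le_sqrt (rad_ge h0 θ))
  simpa [div_eq_mul_inv] using h

lemma EE_cont : Continuous EE := by
  refine intervalIntegral.continuous_parametric_intervalIntegral_of_continuous'
    (f := fun m θ => √(1 - m * Real.sin θ ^ 2)) ?_ _ _
  unfold Function.uncurry
  fun_prop

lemma EE_one : EE 1 = 1 := by
  have : EE 1 = ∫ θ in (0:ℝ)..(Real.pi / 2), Real.cos θ := by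
    refine intervalIntegral.integral_congr fun θ hθ => ?_
    rw [uIcc_of_le (by positivity)] at hθ
    have hc : 0 ≤ Real.cos θ := Real.cos_nonneg_of_mem_Icc ⟨by linarith [hθ.1, Real.pi_pos], hθ.2⟩
    change √(1 - 1 * Real.sin θ ^ 2) = _
    rw [one_mul, ← Real.cos_sq', Real.sqrt_sq hc]
  rw [this]; simp

lemma KE_bound {m : ℝ} (h0 : 0 ≤ m) (h1 : m < 1) :
    0 ≤ KK m - EE m ∧ KK m - EE m ≤ m * KK m := by
  have e : KK m - EE m = ∫ θ in (0:ℝ)..(Real.pi / 2),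
      ((√(1 - m * Real.sin θ ^ 2))⁻¹ - √(1 - m * Real.sin θ ^ 2)) :=
    (intervalIntegral.integral_sub ((Dinv_cont h1).intervalIntegrable _ _)
      ((D_cont m).intervalIntegrable _ _)).symm
  have e2 : m * KK m = ∫ θ in (0:ℝ)..(Real.pi / 2), m * (√(1 - m * Real.sin θ ^ 2))⁻¹ :=
    (intervalIntegral.integral_const_mul _ _).symm
  have hf : ∀ θ, (√(1 - m * Real.sin θ ^ 2))⁻¹ - √(1 - m * Real.sin θ ^ 2)
      = m * Real.sin θ ^ 2 * (√(1 - m * Real.sin θ ^ 2))⁻¹ := by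
    intro θ
    have hD := D_pos h1 θ
    have hsq : √(1 - m * Real.sin θ ^ 2) ^ 2 = 1 - m * Real.sin θ ^ 2 :=
      Real.sq_sqrt (rad_pos h1 θ).le
    set D := √(1 - m * Real.sin θ ^ 2)
    field_simp
    linarith
  rw [e, e2]
  constructor
  · refine intervalIntegral.integral_nonneg (by positivity) fun θ _ => ?_
    rw [hf]
    have hD := D_pos h1 θ
    positivity
  · refine intervalIntegral.integral_mono_on (by positivity)
      (((Dinv_cont h1).sub (D_cont m)).intervalIntegrable _ _)
      (((Dinv_cont h1).const_mul m).intervalIntegrable _ _) fun θ _ => ?_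
    rw [hf]
    have hD := D_pos h1 θ
    have h3 := Real.sin_sq_le_one θ
    have : m * Real.sin θ ^ 2 ≤ m := by nlinarith
    gcongr

/-- Legendre's function. -/
noncomputable def Leg (m : ℝ) : ℝ :=
  EE m * KK (1 - m) + EE (1 - m) * KK m - KK m * KK (1 - m)

lemma one_sub_deriv (m : ℝ) : HasDerivAt (fun m : ℝ => 1 - m) (-1) m := by
  simpa using (hasDerivAt_id m).const_sub 1

lemma KK1_deriv {m : ℝ} (h0 : 0 < m) (h1 : m < 1) : HasDerivAt (fun m => KK (1 - m))
    (-((EE (1 - m) - m * KK (1 - m)) / (2 * m * (1 - m)))) m := by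
  have h := (KK_deriv (m := 1 - m) (by linarith) (by linarith)).comp m (one_sub_deriv m)
  refine h.congr_deriv ?_
  ring

lemma EE1_deriv {m : ℝ} (h0 : 0 < m) (h1 : m < 1) : HasDerivAt (fun m => EE (1 - m))
    (-((EE (1 - m) - KK (1 - m)) / (2 * (1 - m)))) m := by
  have h := (EE_deriv (m := 1 - m) (by linarith) (by linarith)).comp m (one_sub_deriv m)
  refine h.congr_deriv ?_
  ring

lemma Leg_deriv {m : ℝ} (h0 : 0 < m) (h1 : m < 1) : HasDerivAt Leg 0 m := by
  have h := (((EE_deriv h0 h1).mul (KK1_deriv h0 h1)).add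
    ((EE1_deriv h0 h1).mul (KK_deriv h0 h1))).sub ((KK_deriv h0 h1).mul (KK1_deriv h0 h1))
  refine h.congr_deriv ?_
  have : 1 - m ≠ 0 := by linarith
  field_simp
  ring

lemma KK_tendsto : Tendsto KK (𝓝[>] 0) (𝓝 (Real.pi / 2)) := by
  have hc : ContinuousAt (fun m : ℝ => Real.pi / 2 / √(1 - m)) 0 := by
    fun_prop (disch := simp)
  have h2 : Tendsto (fun m : ℝ => Real.pi / 2 / √(1 - m)) (𝓝[>] 0) (𝓝 (Real.pi / 2)) := by
    have := hc.tendsto.mono_left (nhdsWithin_le_nhds (s := Ioi 0))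
    simpa using this
  have hm : Ioo (0:ℝ) 1 ∈ 𝓝[>] (0:ℝ) := Ioo_mem_nhdsGT one_pos
  refine tendsto_of_tendsto_of_tendsto_of_le_of_le' tendsto_const_nhds h2 ?_ ?_
  · filter_upwards [hm] with m h using KK_ge h.1.le h.2
  · filter_upwards [hm] with m h using KK_le h.1.le h.2

lemma Leg_tendsto : Tendsto Leg (𝓝[>] 0) (𝓝 (Real.pi / 2)) := by
  have hm : Ioo (0:ℝ) 1 ∈ 𝓝[>] (0:ℝ) := Ioo_mem_nhdsGT one_pos
  have hE : Tendsto (fun m => EE (1 - m)) (𝓝[>] 0) (𝓝 1) := by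
    have : Continuous (fun m => EE (1 - m)) := EE_cont.comp (by fun_prop)
    have := (this.tendsto 0).mono_left (nhdsWithin_le_nhds (s := Ioi 0))
    simpa [EE_one] using this
  have hs : Tendsto (fun m : ℝ => √m) (𝓝[>] 0) (𝓝 0) := by
    have := (Real.continuous_sqrt.tendsto 0).mono_left (nhdsWithin_le_nhds (s := Ioi 0))
    simpa using this
  have hz : Tendsto (fun m => (KK m - EE m) * KK (1 - m)) (𝓝[>] 0) (𝓝 0) := by
    have hu : Tendsto (fun m => √m * KK m * (Real.pi / 2)) (𝓝[>] 0) (𝓝 0) := by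
      simpa using (hs.mul KK_tendsto).mul_const (Real.pi / 2)
    refine tendsto_of_tendsto_of_tendsto_of_le_of_le' tendsto_const_nhds hu ?_ ?_
    · filter_upwards [hm] with m h
      exact mul_nonneg (KE_bound h.1.le h.2).1
        (KK_pos (by linarith [h.2]) (by linarith [h.1])).le
    · filter_upwards [hm] with m h
      have h1 := KE_bound h.1.le h.2
      have h2 := KK_le (m := 1 - m) (by linarith [h.2]) (by linarith [h.1])
      rw [sub_sub_cancel] at h2
      have h3 := KK_pos h.1.le h.2
      have hp : 0 < √m := Real.sqrt_pos.2 h.1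
      have hq : √m * √m = m := Real.mul_self_sqrt h.1.le
      calc _ ≤ (m * KK m) * (Real.pi / 2 / √m) := by
            refine mul_le_mul h1.2 h2 (KK_pos (by linarith [h.2]) (by linarith [h.1])).le ?_
            exact mul_nonneg h.1.le h3.le
        _ = (√m * √m * KK m) * (Real.pi / 2 / √m) := by rw [hq]
        _ = _ := by field_simp
  have := (hE.mul KK_tendsto).sub hz
  simp only [one_mul, sub_zero] at this
  refine this.congr fun m => ?_
  unfold Leg
  ring

lemma Leg_eq {m : ℝ} (h0 : 0 < m) (h1 : m < 1) : Leg m = Real.pi / 2 := by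
  have hc : ∀ x ∈ Ioo (0:ℝ) 1, Leg x = Leg m := fun x hx =>
    isOpen_Ioo.is_const_of_deriv_eq_zero isPreconnected_Ioo
      (fun y hy => (Leg_deriv hy.1 hy.2).differentiableAt.differentiableWithinAt)
      (fun y hy => (Leg_deriv hy.1 hy.2).deriv) hx ⟨h0, h1⟩
  have hm : Ioo (0:ℝ) 1 ∈ 𝓝[>] (0:ℝ) := Ioo_mem_nhdsGT one_pos
  have h2 : Tendsto Leg (𝓝[>] 0) (𝓝 (Leg m)) := by
    refine tendsto_const_nhds.congr' ?_
    filter_upwards [hm] with x hx using (hc x hx).symm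
  exact tendsto_nhds_unique h2 Leg_tendsto

/-- The modulus as a function of the parameter `m = r ^ 2`. -/
noncomputable def MM (m : ℝ) : ℝ := Real.pi / 2 * KK (1 - m) / KK m

lemma MM_deriv {m : ℝ} (h0 : 0 < m) (h1 : m < 1) :
    HasDerivAt MM (-(Real.pi ^ 2 / (8 * m * (1 - m) * KK m ^ 2))) m := by
  have hK := KK_pos h0.le h1
  have h := ((KK1_deriv h0 h1).const_mul (Real.pi / 2)).div (KK_deriv h0 h1) hK.ne'
  refine h.congr_deriv ?_
  have hL := Leg_eq h0 h1
  unfold Leg at hL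
  have hp : Real.pi = 2 * (EE m * KK (1 - m) + EE (1 - m) * KK m - KK m * KK (1 - m)) := by linarith
  have : 1 - m ≠ 0 := by linarith
  have h3 : Real.pi ^ 2 = Real.pi *
    (2 * (EE m * KK (1 - m) + EE (1 - m) * KK m - KK m * KK (1 - m))) := by rw [← hp]; ring
  rw [h3]
  field_simp
  ring

/-- The key inequality. -/
lemma key {m : ℝ} (h0 : 0 < m) (h1 : m < 1) :
    Real.pi ^ 2 / 4 < KK m * ((2 - m) * KK m - EE m) := by
  set b : ℝ → ℝ := fun θ => √(1 - m * Real.sin θ ^ 2) with hb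
  set a : ℝ → ℝ := fun θ => √(1 - m * Real.cos θ ^ 2) with ha
  have hab : ∀ θ, a θ = b (Real.pi / 2 - θ) := by
    intro θ; simp only [ha, hb, Real.sin_pi_div_two_sub]
  have hba : ∀ θ, b θ = a (Real.pi / 2 - θ) := by
    intro θ; simp only [ha, hb, Real.cos_pi_div_two_sub]
  have hbp : ∀ θ, 0 < b θ := fun θ => D_pos h1 θ
  have hap : ∀ θ, 0 < a θ := fun θ => by rw [hab]; exact hbp _
  have hbc : Continuous b := D_cont m
  have hac : Continuous a := by fun_prop
  have hbs : ∀ θ, b θ ^ 2 = 1 - m * Real.sin θ ^ 2 := fun θ => Real.sq_sqrt (rad_pos h1 θ).le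
  have has : ∀ θ, a θ ^ 2 = 1 - m * Real.cos θ ^ 2 := fun θ => by
    rw [hab, hbs, Real.sin_pi_div_two_sub]
  have hc1 : Continuous (fun θ => a θ / b θ) := hac.div hbc fun θ => (hbp θ).ne'
  have hc2 : Continuous (fun θ => b θ / a θ) := hbc.div hac fun θ => (hap θ).ne'
  have hc3 : Continuous (fun θ => a θ ^ 2 / b θ) := (hac.pow 2).div hbc fun θ => (hbp θ).ne'
  have hc4 : Continuous (fun θ => (b θ)⁻¹) := Dinv_cont h1
  set C := ∫ θ in (0:ℝ)..(Real.pi / 2), a θ / b θ with hC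
  have hC' : C = ∫ θ in (0:ℝ)..(Real.pi / 2), b θ / a θ := by
    have := intervalIntegral.integral_comp_sub_left (a := 0) (b := Real.pi / 2)
      (fun θ => b θ / a θ) (Real.pi / 2)
    simp only [sub_self, sub_zero] at this
    rw [← this, hC]
    refine intervalIntegral.integral_congr fun θ _ => ?_
    simp only [← hab, ← hba]
  have hCgt : Real.pi / 2 < C := by
    have hlt : ∫ θ in (0:ℝ)..(Real.pi / 2), (2:ℝ)
        < ∫ θ in (0:ℝ)..(Real.pi / 2), (a θ / b θ + b θ / a θ) := by
      have hid : ∀ θ, a θ / b θ + b θ / a θ - 2 = (a θ - b θ) ^ 2 / (a θ * b θ) := by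
        intro θ
        have := hbp θ
        have := hap θ
        field_simp
        ring
      refine intervalIntegral.integral_lt_integral_of_continuousOn_of_le_of_exists_lt
        (by positivity) continuousOn_const (hc1.add hc2).continuousOn (fun θ _ => ?_)
        ⟨0, ⟨le_rfl, by positivity⟩, ?_⟩
      · have := hbp θ
        have := hap θ
        have : 0 ≤ (a θ - b θ) ^ 2 / (a θ * b θ) := by positivity
        linarith [hid θ]
      · have hne : a 0 - b 0 ≠ 0 := by
          intro h
          have h5 : a 0 ^ 2 = b 0 ^ 2 := by rw [sub_eq_zero.1 h]
          rw [has, hbs] at h5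
          simp at h5
          linarith
        have := hbp 0
        have := hap 0
        have : 0 < (a 0 - b 0) ^ 2 / (a 0 * b 0) := by positivity
        linarith [hid 0]
    rw [intervalIntegral.integral_add (hc1.intervalIntegrable _ _) (hc2.intervalIntegrable _ _),
      ← hC', ← hC] at hlt
    simp at hlt
    linarith
  have hA : (2 - m) * KK m - EE m = ∫ θ in (0:ℝ)..(Real.pi / 2), a θ ^ 2 / b θ := by
    have : (2 - m) * KK m - EE m
        = ∫ θ in (0:ℝ)..(Real.pi / 2), ((2 - m) * (b θ)⁻¹ - b θ) := by
      rw [intervalIntegral.integral_sub ((hc4.const_mul _).intervalIntegrable _ _)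
        (hbc.intervalIntegrable _ _), intervalIntegral.integral_const_mul]
      rfl
    rw [this]
    refine intervalIntegral.integral_congr fun θ _ => ?_
    have h5 := hbp θ
    have h6 := has θ
    have h7 := hbs θ
    have h8 := Real.sin_sq_add_cos_sq θ
    change (2 - m) * (b θ)⁻¹ - b θ = a θ ^ 2 / b θ
    field_simp
    rw [h6, h7]
    linear_combination m * h8
  have hK := KK_pos h0.le h1
  have hCS : C ^ 2 ≤ KK m * ((2 - m) * KK m - EE m) := by
    set l := C / KK m with hl
    have hn : 0 ≤ ∫ θ in (0:ℝ)..(Real.pi / 2), (a θ ^ 2 / b θ - 2 * l * (a θ / b θ)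
        + l ^ 2 * (b θ)⁻¹) := by
      refine intervalIntegral.integral_nonneg (by positivity) fun θ _ => ?_
      have h5 := hbp θ
      have : a θ ^ 2 / b θ - 2 * l * (a θ / b θ) + l ^ 2 * (b θ)⁻¹ = (a θ - l) ^ 2 / b θ := by
        field_simp
        ring
      rw [this]
      positivity
    have hc5 : Continuous (fun θ => a θ ^ 2 / b θ - 2 * l * (a θ / b θ)) :=
      hc3.sub (hc1.const_mul _)
    rw [intervalIntegral.integral_add (hc5.intervalIntegrable _ _)
      ((hc4.const_mul _).intervalIntegrable _ _),
      intervalIntegral.integral_sub (hc3.intervalIntegrable _ _)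
      ((hc1.const_mul _).intervalIntegrable _ _), intervalIntegral.integral_const_mul,
      intervalIntegral.integral_const_mul, ← hA, ← hC] at hn
    change 0 ≤ (2 - m) * KK m - EE m - 2 * l * C + l ^ 2 * KK m at hn
    have hlC : C = l * KK m := by rw [hl]; field_simp
    rw [hlC] at hn ⊢
    nlinarith
  have hpi := Real.pi_pos
  nlinarith

/-- The logarithm of the auxiliary function. -/
noncomputable def HL (m : ℝ) : ℝ :=
  Real.log (1 - m) - Real.log m + 2 * Real.log (2 / Real.pi * KK m) - 2 * MM m

lemma HL_deriv {m : ℝ} (h0 : 0 < m) (h1 : m < 1) :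
    HasDerivAt HL ((Real.pi ^ 2 / 4 - KK m * ((2 - m) * KK m - EE m)) /
      (m * (1 - m) * KK m ^ 2)) m := by
  have hK := KK_pos h0.le h1
  have hpi := Real.pi_pos
  have hm : 1 - m ≠ 0 := by linarith
  have h := ((((one_sub_deriv m).log hm).sub ((hasDerivAt_id m).log h0.ne')).add
    ((((KK_deriv h0 h1).const_mul (2 / Real.pi)).log (by positivity)).const_mul 2)).sub
    ((MM_deriv h0 h1).const_mul 2)
  refine h.congr_deriv ?_
  simp only [id]
  field_simp
  ring

lemma HL_anti : StrictAntiOn HL (Ioo 0 1) := by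
  refine strictAntiOn_of_deriv_neg (convex_Ioo 0 1)
    (fun m h => (HL_deriv h.1 h.2).continuousAt.continuousWithinAt) fun m h => ?_
  rw [interior_Ioo] at h
  rw [(HL_deriv h.1 h.2).deriv]
  have hK := KK_pos h.1.le h.2
  have := h.1
  have h2 : 0 < 1 - m := by linarith [h.2]
  exact div_neg_of_neg_of_pos (by linarith [key h.1 h.2]) (by positivity)

lemma KK1_ge {m : ℝ} (h0 : 0 < m) (h1 : m < 1) :
    Real.log 2 + Real.log (1 + √(1 - m)) - Real.log (√m) ≤ KK (1 - m) := by
  set w := √(1 - m) with hw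
  have hw0 : 0 < w := Real.sqrt_pos.2 (by linarith)
  have hw2 : w ^ 2 = 1 - m := Real.sq_sqrt (by linarith)
  have hw1 : w < 1 := by nlinarith
  have h1' : 1 - m < 1 := by linarith
  have hIc : ∀ θ ∈ Icc 0 (Real.pi / 2), 0 ≤ Real.sin θ ∧ 0 ≤ Real.cos θ := fun θ h =>
    ⟨Real.sin_nonneg_of_nonneg_of_le_pi h.1 (by linarith [h.2, Real.pi_pos]),
      Real.cos_nonneg_of_mem_Icc ⟨by linarith [h.1, Real.pi_pos], h.2⟩⟩
  have hd : ∀ θ ∈ uIcc 0 (Real.pi / 2), HasDerivAt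
      (fun θ => Real.log (1 + Real.sin θ) -
        Real.log (w * Real.cos θ + √(1 - (1 - m) * Real.sin θ ^ 2)))
      (Real.cos θ / (1 + Real.sin θ) +
        w * Real.sin θ * (√(1 - (1 - m) * Real.sin θ ^ 2))⁻¹) θ := by
    intro θ hθ
    rw [uIcc_of_le (by positivity)] at hθ
    obtain ⟨hs, hc⟩ := hIc θ hθ
    have hp := rad_pos h1' θ
    have hD := D_pos h1' θ
    have e1 : HasDerivAt (fun θ => 1 - (1 - m) * Real.sin θ ^ 2)
        (-((1 - m) * (2 * Real.sin θ * Real.cos θ))) θ := by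
      have := (((Real.hasDerivAt_sin θ).pow 2).const_mul (1 - m)).const_sub 1
      simpa using this
    have e2 := e1.sqrt hp.ne'
    have e3 := (((Real.hasDerivAt_sin θ).const_add 1).log (by positivity)).sub
      ((((Real.hasDerivAt_cos θ).const_mul w).add e2).log (by
        have : 0 < w * Real.cos θ + √(1 - (1 - m) * Real.sin θ ^ 2) := by positivity
        exact this.ne'))
    refine e3.congr_deriv ?_
    simp only [Pi.add_apply]
    rw [← hw2]
    rw [← hw2] at hD
    set D := √(1 - w ^ 2 * Real.sin θ ^ 2)
    have h5 : 0 < w * Real.cos θ + D := by positivity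
    have h6 : 0 < 1 + Real.sin θ := by positivity
    field_simp
    ring
  have hcont : ContinuousOn (fun θ => Real.cos θ / (1 + Real.sin θ) +
        w * Real.sin θ * (√(1 - (1 - m) * Real.sin θ ^ 2))⁻¹) (Icc 0 (Real.pi / 2)) := by
    refine ContinuousOn.add ?_ ?_
    · refine ContinuousOn.div (by fun_prop) (by fun_prop) fun θ h => ?_
      have := (hIc θ h).1
      positivity
    · exact ((by fun_prop : Continuous fun θ => w * Real.sin θ).mul (Dinv_cont h1')).continuousOn
  have hint := hcont.intervalIntegrable_of_Icc (μ := MeasureTheory.volume) (by positivity)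
  have h := intervalIntegral.integral_eq_sub_of_hasDerivAt hd hint
  have hle : ∫ θ in (0:ℝ)..(Real.pi / 2), (Real.cos θ / (1 + Real.sin θ) +
        w * Real.sin θ * (√(1 - (1 - m) * Real.sin θ ^ 2))⁻¹) ≤ KK (1 - m) := by
    refine intervalIntegral.integral_mono_on (by positivity) hint
      ((Dinv_cont h1').intervalIntegrable _ _) fun θ hθ => ?_
    obtain ⟨hs, hc⟩ := hIc θ hθ
    have hD := D_pos h1' θ
    have hsq : √(1 - (1 - m) * Real.sin θ ^ 2) ^ 2 = 1 - (1 - m) * Real.sin θ ^ 2 :=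
      Real.sq_sqrt (rad_pos h1' θ).le
    rw [← hw2] at hsq hD ⊢
    set D := √(1 - w ^ 2 * Real.sin θ ^ 2)
    have hcs := Real.sin_sq_add_cos_sq θ
    have hs1 := Real.sin_le_one θ
    set s := Real.sin θ
    set c := Real.cos θ
    have hws : w * s ≤ s := by nlinarith
    have hws1 : 0 ≤ 1 - w * s := by linarith
    have hws0 : 0 ≤ w * s := by positivity
    have hmain : c * D ≤ (1 - w * s) * (1 + s) := by
      refine abs_le_of_sq_le_sq' ?_ (by positivity) |>.2
      have e1 : (c * D) ^ 2 = ((1 - s) * (1 + w * s)) * ((1 + s) * (1 - w * s)) := by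
        rw [mul_pow, hsq, (by linarith : c ^ 2 = 1 - s ^ 2)]; ring
      have e2 : ((1 - w * s) * (1 + s)) ^ 2
        = ((1 - w * s) * (1 + s)) * ((1 + s) * (1 - w * s)) := by ring
      rw [e1, e2]
      refine mul_le_mul_of_nonneg_right (by nlinarith) (by positivity)
    have h6 : 0 < 1 + s := by positivity
    have h7 : c / (1 + s) ≤ (1 - w * s) * D⁻¹ := by
      rw [← div_eq_mul_inv, div_le_div_iff₀ h6 hD]
      exact hmain
    linarith
  rw [h] at hle
  have hk : √(1 - (1 - m)) = √m := by rw [sub_sub_cancel]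
  simp only [Real.sin_pi_div_two, Real.cos_pi_div_two, Real.sin_zero, Real.cos_zero, one_pow,
    mul_one, mul_zero, zero_add, add_zero, hk, Real.log_one, sub_zero, ne_eq, OfNat.ofNat_ne_zero,
    not_false_eq_true, zero_pow, Real.sqrt_one] at hle
  rw [one_add_one_eq_two, add_comm w 1] at hle
  linarith

lemma MM_ge {m : ℝ} (h0 : 0 < m) (h1 : m < 1) :
    √(1 - m) * (Real.log 2 + Real.log (1 + √(1 - m)) - Real.log m / 2) ≤ MM m := by
  have hK := KK_pos h0.le h1
  have hw0 : 0 < √(1 - m) := Real.sqrt_pos.2 (by linarith)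
  have h2 := KK1_ge h0 h1
  rw [Real.log_sqrt h0.le] at h2
  have h3 := KK_le h0.le h1
  rw [le_div_iff₀ hw0] at h3
  have h4 : √(1 - m) ≤ Real.pi / 2 / KK m := by
    rw [le_div_iff₀ hK]; linarith
  have h5 := KK_pos (m := 1 - m) (by linarith) (by linarith)
  calc _ ≤ √(1 - m) * KK (1 - m) := by gcongr
    _ ≤ Real.pi / 2 / KK m * KK (1 - m) := by gcongr
    _ = MM m := by unfold MM; ring

lemma log_term_tendsto : Tendsto (fun m : ℝ => Real.log 2 + Real.log (1 + √(1 - m)))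
    (𝓝[>] 0) (𝓝 (2 * Real.log 2)) := by
  have hc : ContinuousAt (fun m : ℝ => Real.log 2 + Real.log (1 + √(1 - m))) 0 := by
    fun_prop (disch := norm_num)
  have := hc.tendsto.mono_left (nhdsWithin_le_nhds (s := Ioi 0))
  simp only [sub_zero, Real.sqrt_one, one_add_one_eq_two] at this
  rwa [two_mul]

lemma w_tendsto : Tendsto (fun m : ℝ => √(1 - m)) (𝓝[>] 0) (𝓝 1) := by
  have hc : Continuous (fun m : ℝ => √(1 - m)) := by fun_prop
  have := (hc.tendsto 0).mono_left (nhdsWithin_le_nhds (s := Ioi 0))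
  simpa using this

lemma MM_tendsto : Tendsto MM (𝓝[>] 0) atTop := by
  have h1 : Tendsto (fun m : ℝ => -(Real.log m / 2)) (𝓝[>] 0) atTop :=
    tendsto_neg_atBot_atTop.comp (Real.tendsto_log_nhdsGT_zero.atBot_div_const two_pos)
  have h2 := w_tendsto.pos_mul_atTop one_pos (log_term_tendsto.add_atTop h1)
  refine tendsto_atTop_mono' _ ?_ h2
  filter_upwards [Ioo_mem_nhdsGT (one_pos : (0:ℝ) < 1)] with m hm
  have := MM_ge hm.1 hm.2
  simpa [sub_eq_add_neg] using this

lemma HL_lt {m : ℝ} (h0 : 0 < m) (h1 : m < 1) : HL m < -Real.log 16 := by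
  have hB : Tendsto (fun m : ℝ => -(m * Real.log m) / (1 + √(1 - m)) -
      2 * √(1 - m) * (Real.log 2 + Real.log (1 + √(1 - m)))) (𝓝[>] 0) (𝓝 (-Real.log 16)) := by
    have e1 : Tendsto (fun m : ℝ => m * Real.log m) (𝓝[>] 0) (𝓝 0) := by
      have := (Real.continuous_mul_log.tendsto 0).mono_left (nhdsWithin_le_nhds (s := Ioi 0))
      simpa using this
    have e2 := (e1.neg.div (w_tendsto.const_add 1) (by norm_num)).sub
      ((w_tendsto.const_mul 2).mul log_term_tendsto)
    have e3 : Real.log 16 = 4 * Real.log 2 := by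
      rw [(by norm_num : (16:ℝ) = 2 ^ 4), Real.log_pow]; norm_num
    have e4 : -Real.log 16 = -0 / (1 + 1) - 2 * 1 * (2 * Real.log 2) := by rw [e3]; ring
    rw [e4]
    exact e2
  have hlt : HL m < HL (m / 2) := HL_anti ⟨by linarith, by linarith⟩ ⟨h0, h1⟩ (by linarith)
  refine lt_of_lt_of_le hlt (ge_of_tendsto hB ?_)
  have hm2 : 0 < m / 2 := by linarith
  filter_upwards [Ioo_mem_nhdsGT hm2] with x hx
  have hx1 : x < 1 := by linarith [hx.2]
  have hx0 := hx.1
  have ha : HL (m / 2) < HL x := HL_anti ⟨hx0, hx1⟩ ⟨hm2, by linarith⟩ hx.2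
  refine ha.le.trans ?_
  have hM := MM_ge hx0 hx1
  have hw0 : 0 < √(1 - x) := Real.sqrt_pos.2 (by linarith)
  have hw2 : √(1 - x) ^ 2 = 1 - x := Real.sq_sqrt (by linarith)
  have hK := KK_pos hx0.le hx1
  have hpi := Real.pi_pos
  have hlog : 2 * Real.log (2 / Real.pi * KK x) ≤ - Real.log (1 - x) := by
    have h3 := KK_le hx0.le hx1
    have h4 : 2 / Real.pi * KK x ≤ (√(1 - x))⁻¹ := by
      calc _ ≤ 2 / Real.pi * (Real.pi / 2 / √(1 - x)) := by gcongr
        _ = _ := by field_simp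
    have h5 := Real.log_le_log (by positivity) h4
    rw [Real.log_inv, Real.log_sqrt (by linarith)] at h5
    linarith
  have hid : -(x * Real.log x) / (1 + √(1 - x)) = -(1 - √(1 - x)) * Real.log x := by
    have : 0 < 1 + √(1 - x) := by positivity
    field_simp
    linear_combination (-Real.log x) * hw2
  rw [hid]
  unfold HL
  nlinarith

lemma HL_exp {m : ℝ} (h0 : 0 < m) (h1 : m < 1) :
    Real.exp (HL m) = (1 - m) / m * (2 / Real.pi * KK m) ^ 2 * Real.exp (-(2 * MM m)) := by
  have hK := KK_pos h0.le h1
  have hpi := Real.pi_pos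
  unfold HL
  rw [sub_eq_add_neg _ (2 * MM m), Real.exp_add, Real.exp_add, Real.exp_sub,
    Real.exp_log (by linarith), Real.exp_log h0, two_mul (Real.log _), Real.exp_add,
    Real.exp_log (by positivity)]
  ring

/-- Derivative of the comparison function. -/
lemma F_deriv (c : ℝ) {m : ℝ} (h0 : 0 < m) (h1 : m < 1) :
    HasDerivAt (fun m => m⁻¹ - c * Real.exp (2 * MM m))
      ((c - Real.exp (HL m)) *
        (Real.pi ^ 2 / (4 * m * (1 - m) * KK m ^ 2) * Real.exp (2 * MM m))) m := by
  have hK := KK_pos h0.le h1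
  have hpi := Real.pi_pos
  have hm : 1 - m ≠ 0 := by linarith
  have h := (hasDerivAt_inv h0.ne').sub ((((MM_deriv h0 h1).const_mul 2).exp).const_mul c)
  refine h.congr_deriv ?_
  rw [HL_exp h0 h1, Real.exp_neg]
  have := Real.exp_pos (2 * MM m)
  field_simp
  ring

lemma F_factor_pos {m : ℝ} (h0 : 0 < m) (h1 : m < 1) :
    0 < Real.pi ^ 2 / (4 * m * (1 - m) * KK m ^ 2) * Real.exp (2 * MM m) := by
  have hK := KK_pos h0.le h1
  have hm : 0 < 1 - m := by linarith
  positivity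

lemma ellK_eq {r : ℝ} (h : r ^ 2 ≤ 1) : ellK r = KK (r ^ 2) := by
  refine intervalIntegral.integral_congr fun θ _ => ?_
  have h2 : 0 ≤ 1 - r ^ 2 * Real.sin θ ^ 2 := by
    nlinarith [Real.sin_sq_le_one θ, sq_nonneg r, sq_nonneg (Real.sin θ)]
  change (1 - r ^ 2 * Real.sin θ ^ 2) ^ (-(1/2) : ℝ) = (√(1 - r ^ 2 * Real.sin θ ^ 2))⁻¹
  rw [Real.rpow_neg h2, Real.sqrt_eq_rpow]

lemma mu_eq {r : ℝ} (h : r ^ 2 ≤ 1) : mu r = MM (r ^ 2) := by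
  have h2 : √(1 - r ^ 2) ^ 2 = 1 - r ^ 2 := Real.sq_sqrt (by linarith)
  unfold mu MM
  rw [ellK_eq h, ellK_eq (by rw [h2]; nlinarith [sq_nonneg r]), h2]

theorem stmt_12 (eta : ℝ → ℝ → ℝ)
    (heta : ∀ K t : ℝ, 0 < K → 0 < t → ∀ u ∈ Set.Ioo (0:ℝ) 1,
      mu u = K * mu (1 / Real.sqrt (1 + t)) → eta K t = 1 / u ^ 2 - 1) :
    ∀ t K : ℝ, 0 < t → 1 < K →
      t + t * (2 / Real.pi * ellK (1 / Real.sqrt (1 + t))) ^ 2 *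
        (Real.exp (2 * (K - 1) * mu (1 / Real.sqrt (1 + t))) - 1) < eta K t ∧
      eta K t < t + 1 / 16 * Real.exp (2 * mu (1 / Real.sqrt (1 + t))) *
        (Real.exp (2 * (K - 1) * mu (1 / Real.sqrt (1 + t))) - 1) := by
  intro t K ht hK
  have hheta := heta K t (by linarith) ht
  have hsq : (1 / √(1 + t)) ^ 2 = (1 + t)⁻¹ := by
    rw [div_pow, Real.sq_sqrt (by linarith)]; simp
  set m₀ := (1 + t)⁻¹ with hm₀
  have hm0 : 0 < m₀ := by positivity
  have hm1 : m₀ < 1 := inv_lt_one_of_one_lt₀ (by linarith)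
  have hti : m₀⁻¹ = 1 + t := by rw [hm₀, inv_inv]
  have hle : (1 / √(1 + t)) ^ 2 ≤ 1 := by rw [hsq]; exact hm1.le
  rw [mu_eq hle, hsq] at hheta
  rw [mu_eq hle, ellK_eq hle, hsq]
  have hMpos : 0 < MM m₀ := by
    have h1 := KK_pos hm0.le hm1
    have h2 := KK_pos (m := 1 - m₀) (by linarith) (by linarith)
    unfold MM
    positivity
  -- existence of the solution
  obtain ⟨x, hxM, hx⟩ := ((MM_tendsto.eventually_ge_atTop (K * MM m₀)).and
    (Ioo_mem_nhdsGT hm0)).exists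
  have hcM : ContinuousOn MM (Icc x m₀) := fun y hy =>
    (MM_deriv (by linarith [hx.1, hy.1]) (by linarith [hy.2])).continuousAt.continuousWithinAt
  obtain ⟨m, hm, hmM⟩ := intermediate_value_Icc' hx.2.le hcM
    (⟨by nlinarith, hxM⟩ : K * MM m₀ ∈ Icc (MM m₀) (MM x))
  have hmpos : 0 < m := by linarith [hx.1, hm.1]
  have hmlt : m < m₀ := by
    refine lt_of_le_of_ne hm.2 fun h => ?_
    rw [h] at hmM
    nlinarith
  have hsm : √m ^ 2 = m := Real.sq_sqrt hmpos.le
  have heq : eta K t = 1 / m - 1 := by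
    have := hheta (√m) ⟨Real.sqrt_pos.2 hmpos, by
      rw [Real.sqrt_lt' one_pos]; linarith⟩
      (by rw [mu_eq (by rw [hsm]; linarith), hsm, hmM])
    rwa [hsm] at this
  rw [heq, one_div m]
  have hcF : ∀ c, ContinuousOn (fun m => m⁻¹ - c * Real.exp (2 * MM m)) (Icc m m₀) := fun c y hy =>
    (F_deriv c (by linarith [hy.1]) (by linarith [hy.2])).continuousAt.continuousWithinAt
  have hexp : Real.exp (2 * MM m) = Real.exp (2 * MM m₀) * Real.exp (2 * (K - 1) * MM m₀) := by
    rw [hmM, ← Real.exp_add]; congr 1; ring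
  constructor
  · have hanti : StrictAntiOn (fun m => m⁻¹ - Real.exp (HL m₀) * Real.exp (2 * MM m))
        (Icc m m₀) := by
      refine strictAntiOn_of_deriv_neg (convex_Icc _ _) (hcF _) fun y hy => ?_
      rw [interior_Icc] at hy
      have hy0 : 0 < y := by linarith [hy.1]
      have hy1 : y < 1 := by linarith [hy.2]
      rw [(F_deriv _ hy0 hy1).deriv]
      refine mul_neg_of_neg_of_pos ?_ (F_factor_pos hy0 hy1)
      have := Real.exp_lt_exp.2 (HL_anti ⟨hy0, hy1⟩ ⟨hm0, hm1⟩ hy.2)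
      linarith
    have h := hanti (left_mem_Icc.2 hmlt.le) (right_mem_Icc.2 hmlt.le) hmlt
    simp only at h
    have hH : Real.exp (HL m₀) * Real.exp (2 * MM m₀) = t * (2 / Real.pi * KK m₀) ^ 2 := by
      rw [HL_exp hm0 hm1, Real.exp_neg, mul_assoc, inv_mul_cancel₀ (Real.exp_pos _).ne', mul_one]
      congr 1
      rw [sub_div, one_div, hti, div_self hm0.ne']; ring
    rw [hexp, ← mul_assoc, hH, hti] at h
    linarith
  · have hmono : StrictMonoOn (fun m => m⁻¹ - 1 / 16 * Real.exp (2 * MM m)) (Icc m m₀) := by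
      refine strictMonoOn_of_deriv_pos (convex_Icc _ _) (hcF _) fun y hy => ?_
      rw [interior_Icc] at hy
      have hy0 : 0 < y := by linarith [hy.1]
      have hy1 : y < 1 := by linarith [hy.2]
      rw [(F_deriv _ hy0 hy1).deriv]
      refine mul_pos ?_ (F_factor_pos hy0 hy1)
      have := Real.exp_lt_exp.2 (HL_lt hy0 hy1)
      rw [Real.exp_neg, Real.exp_log (by norm_num)] at this
      linarith
    have h := hmono (left_mem_Icc.2 hmlt.le) (right_mem_Icc.2 hmlt.le) hmlt
    simp only at h
    rw [hexp, hti] at h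
    linarith
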